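/- For every κ ∈ (0, π] there exists a constant c > 0, depending only on κ, such that for all a > 0 and all k ∈ [-π/a, π/a]^4 with Euclidean norm |k| ≥ κ/a, one has Σ_{μ=0}^3 a^{-2} sin^2(k_μ a) + ( a^{-1} Σ_{μ=0}^3 (1 - cos(k_μ a)) )^2 ≥ c · a^{-2}. Consequently, with D(k) the Wilson–Dirac symbol D(k) = Σ_μ i γ_0 γ_μ a^{-1} sin(k_μ a) + a^{-1} γ_0 Σ_μ (1 - cos(k_μ a)) (Wilson parameter r = 1), D(k) is invertible and the operator norm of D(k)^{-1} is at most a/√c. -/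

import Mathlib

open scoped Real
open Matrix

/-- The Pauli matrices `σ_1, σ_2, σ_3` (with `σ_0 = I` for convenience). -/
noncomputable def pauli : Fin 4 → Matrix (Fin 2) (Fin 2) ℂ :=
  ![1, !![0, 1; 1, 0], !![0, -Complex.I; Complex.I, 0], !![1, 0; 0, -1]]

/-- The Euclidean gamma matrices, written in `2×2` blocks as `γ_0 = [[0, I], [I, 0]]` and
`γ_j = [[0, i σ_j], [-i σ_j, 0]]` for `j = 1, 2, 3`. -/
noncomputable def gammaMat (μ : Fin 4) : Matrix (Fin 4) (Fin 4) ℂ :=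
  Matrix.reindex finSumFinEquiv finSumFinEquiv
    (if μ = 0 then Matrix.fromBlocks 0 1 1 0
     else Matrix.fromBlocks 0 (Complex.I • pauli μ) (-(Complex.I • pauli μ)) 0)

/-- The Wilson–Dirac symbol with Wilson parameter `r = 1`. -/
noncomputable def wilsonDirac (a : ℝ) (k : Fin 4 → ℝ) : Matrix (Fin 4) (Fin 4) ℂ :=
  (∑ μ : Fin 4, (Complex.I * ((Real.sin (k μ * a) / a : ℝ) : ℂ)) • (gammaMat 0 * gammaMat μ))
    + (((a⁻¹ * ∑ μ : Fin 4, (1 - Real.cos (k μ * a)) : ℝ)) : ℂ) • gammaMat 0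

theorem gamma0_eq : gammaMat 0 = !![0,0,1,0;0,0,0,1;1,0,0,0;0,1,0,0] := by
  ext i j
  fin_cases i <;> fin_cases j <;>
    simp [gammaMat, finSumFinEquiv, Fin.addCases, Matrix.fromBlocks, pauli]

theorem gamma1_eq : gammaMat 1 = !![0,0,0,Complex.I;0,0,Complex.I,0;
    0,-Complex.I,0,0;-Complex.I,0,0,0] := by
  ext i j
  fin_cases i <;> fin_cases j <;>
    simp [gammaMat, finSumFinEquiv, Fin.addCases, Matrix.fromBlocks, pauli]

theorem gamma2_eq : gammaMat 2 = !![0,0,0,1;0,0,-1,0;0,-1,0,0;1,0,0,0] := by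
  ext i j
  fin_cases i <;> fin_cases j <;>
    simp [gammaMat, finSumFinEquiv, Fin.addCases, Matrix.fromBlocks, pauli]

theorem gamma3_eq : gammaMat 3 = !![0,0,Complex.I,0;0,0,0,-Complex.I;
    -Complex.I,0,0,0;0,Complex.I,0,0] := by
  ext i j
  fin_cases i <;> fin_cases j <;>
    simp [gammaMat, finSumFinEquiv, Fin.addCases, Matrix.fromBlocks, pauli]

theorem symbol_mul (s : Fin 4 → ℝ) (m : ℝ) :
    ((∑ μ : Fin 4, (Complex.I * (s μ : ℂ)) • (gammaMat 0 * gammaMat μ)) + (m : ℂ) • gammaMat 0) *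
      ((∑ μ : Fin 4, (Complex.I * (s μ : ℂ)) • (gammaMat 0 * gammaMat μ))
        + (m : ℂ) • gammaMat 0)ᴴ
      = (((∑ μ, s μ ^ 2 + m ^ 2 : ℝ)) : ℂ) • (1 : Matrix (Fin 4) (Fin 4) ℂ) := by
  have hD : (∑ μ : Fin 4, (Complex.I * (s μ : ℂ)) • (gammaMat 0 * gammaMat μ))
        + (m : ℂ) • gammaMat 0 =
      !![Complex.I * s 0 + s 3, s 1 - Complex.I * s 2, m, 0;
         s 1 + Complex.I * s 2, Complex.I * s 0 - s 3, 0, m;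
         m, 0, Complex.I * s 0 - s 3, - s 1 + Complex.I * s 2;
         0, m, - s 1 - Complex.I * s 2, Complex.I * s 0 + s 3] := by
    rw [Fin.sum_univ_four, gamma0_eq, gamma1_eq, gamma2_eq, gamma3_eq]
    ext i j
    fin_cases i <;> fin_cases j <;>
      simp [Matrix.mul_apply, Fin.sum_univ_four] <;> ring_nf <;> simp [Complex.I_sq] <;> ring
  rw [hD]
  ext i j
  fin_cases i <;> fin_cases j <;>
    simp [Matrix.mul_apply, Fin.sum_univ_four] <;> ring_nf <;> simp [Complex.I_sq] <;> ring

theorem scalar_bound (x : Fin 4 → ℝ) (hx : ∀ μ, |x μ| ≤ π) :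
    4 / π ^ 2 * ∑ μ, x μ ^ 2 ≤
      ∑ μ, Real.sin (x μ) ^ 2 + (∑ μ, (1 - Real.cos (x μ))) ^ 2 := by
  have h1 := fun μ => Real.cos_le_one_sub_mul_cos_sq (hx μ)
  have h2 : ∑ μ, (1 - Real.cos (x μ)) ^ 2 ≤ (∑ μ, (1 - Real.cos (x μ))) ^ 2 :=
    Finset.sum_sq_le_sq_sum_of_nonneg fun μ _ => sub_nonneg.2 (Real.cos_le_one _)
  refine le_trans ?_ (add_le_add_right h2 _)
  rw [← Finset.sum_add_distrib, Finset.mul_sum]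
  refine Finset.sum_le_sum fun μ _ => ?_
  have := Real.sin_sq_add_cos_sq (x μ)
  have := h1 μ
  have e : 4 / π ^ 2 * x μ ^ 2 = 2 * (2 / π ^ 2 * x μ ^ 2) := by ring
  rw [e]
  nlinarith

theorem inv_norm_bound (A : Matrix (Fin 4) (Fin 4) ℂ) (L : ℝ) (hL : 0 < L)
    (h : A * Aᴴ = (L : ℂ) • (1 : Matrix (Fin 4) (Fin 4) ℂ)) :
    IsUnit A ∧ ‖Matrix.toEuclideanCLM (𝕜 := ℂ) (A⁻¹)‖ ≤ 1 / Real.sqrt L := by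
  have hLc : (L : ℂ) ≠ 0 := by exact_mod_cast hL.ne'
  have hr : A * ((L : ℂ)⁻¹ • Aᴴ) = 1 := by
    rw [Matrix.mul_smul, h, smul_smul, inv_mul_cancel₀ hLc, one_smul]
  have hu : IsUnit A := IsUnit.of_mul_eq_one _ hr
  refine ⟨hu, ?_⟩
  have hi : A⁻¹ = (L : ℂ)⁻¹ • Aᴴ := Matrix.inv_eq_right_inv hr
  have hs : star (A⁻¹) * A⁻¹ = (L : ℂ)⁻¹ • (1 : Matrix (Fin 4) (Fin 4) ℂ) := by
    rw [hi, Matrix.star_eq_conjTranspose, Matrix.conjTranspose_smul,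
      Matrix.conjTranspose_conjTranspose, Matrix.smul_mul, hr]
    simp
  set T := Matrix.toEuclideanCLM (𝕜 := ℂ) (A⁻¹) with hT
  have hn : ‖T‖ * ‖T‖ ≤ L⁻¹ := by
    rw [← CStarRing.norm_star_mul_self, hT, ← map_star, ← map_mul, hs, map_smul, map_one,
      norm_smul]
    simp [abs_of_pos hL]
  rw [one_div, ← Real.sqrt_inv]
  apply Real.le_sqrt_of_sq_le
  rw [sq]; exact hn

/-- On the high-momentum region `|k| ≥ κ/a` of the Brillouin zone `[-π/a, π/a]⁴`, the
Wilson–Dirac symbol is bounded below: `∑_μ a⁻² sin²(k_μ a) + (a⁻¹ ∑_μ (1-cos(k_μ a)))² ≥ c a⁻²`;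
consequently `D(k)` is invertible, with operator norm of `D(k)⁻¹` at most `a/√c`. -/
theorem wilsonDirac_lower_bound (κ : ℝ) (hκ0 : 0 < κ) (hκπ : κ ≤ π) :
    ∃ c : ℝ, 0 < c ∧
      ∀ (a : ℝ), 0 < a → ∀ k : Fin 4 → ℝ,
        (∀ μ, -(π / a) ≤ k μ ∧ k μ ≤ π / a) →
        κ / a ≤ Real.sqrt (∑ μ : Fin 4, (k μ) ^ 2) →
        (∑ μ : Fin 4, (Real.sin (k μ * a)) ^ 2 / a ^ 2 +
              (a⁻¹ * ∑ μ : Fin 4, (1 - Real.cos (k μ * a))) ^ 2 ≥ c * (a ^ 2)⁻¹) ∧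
          IsUnit (wilsonDirac a k) ∧
          ‖Matrix.toEuclideanCLM (𝕜 := ℂ) ((wilsonDirac a k)⁻¹)‖ ≤ a / Real.sqrt c := by
  refine ⟨4 / π ^ 2 * κ ^ 2, by positivity, fun a ha k hk hκ => ?_⟩
  have hx : ∀ μ, |k μ * a| ≤ π := fun μ => by
    obtain ⟨h1, h2⟩ := hk μ
    rw [abs_le]
    rw [← neg_div, div_le_iff₀ ha] at h1
    rw [le_div_iff₀ ha] at h2
    exact ⟨h1, h2⟩
  have hb := scalar_bound (fun μ => k μ * a) hx
  have hk2 : κ ^ 2 ≤ ∑ μ, (k μ * a) ^ 2 := by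
    have h0 : 0 ≤ ∑ μ, k μ ^ 2 := Finset.sum_nonneg fun μ _ => sq_nonneg _
    have h1 := (Real.le_sqrt (by positivity) h0).1 hκ
    rw [div_pow, div_le_iff₀ (by positivity)] at h1
    simpa only [mul_pow, ← Finset.sum_mul] using h1
  have hb' := (mul_le_mul_of_nonneg_left hk2 (by positivity : 0 ≤ 4 / π ^ 2)).trans hb
  have hmain : 4 / π ^ 2 * κ ^ 2 * (a ^ 2)⁻¹ ≤ ∑ μ : Fin 4, (Real.sin (k μ * a)) ^ 2 / a ^ 2 +
      (a⁻¹ * ∑ μ : Fin 4, (1 - Real.cos (k μ * a))) ^ 2 := by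
    have := mul_le_mul_of_nonneg_right hb' (by positivity : 0 ≤ (a ^ 2)⁻¹)
    refine this.trans_eq ?_
    rw [add_mul, Finset.sum_mul, mul_pow, inv_pow, mul_comm (a ^ 2)⁻¹]
    simp only [div_eq_mul_inv]
  refine ⟨hmain, ?_⟩
  have hc : 0 < 4 / π ^ 2 * κ ^ 2 * (a ^ 2)⁻¹ := by positivity
  have hm := symbol_mul (fun μ => Real.sin (k μ * a) / a)
    (a⁻¹ * ∑ μ : Fin 4, (1 - Real.cos (k μ * a)))
  simp only [div_pow] at hm
  obtain ⟨h1, h2⟩ := inv_norm_bound (wilsonDirac a k) _ (hc.trans_le hmain) hm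
  refine ⟨h1, h2.trans ?_⟩
  have e : a / Real.sqrt (4 / π ^ 2 * κ ^ 2) =
      1 / Real.sqrt (4 / π ^ 2 * κ ^ 2 * (a ^ 2)⁻¹) := by
    rw [Real.sqrt_mul (by positivity) (a ^ 2)⁻¹, Real.sqrt_inv, Real.sqrt_sq ha.le,
      ← div_eq_mul_inv, one_div_div]
  rw [e]
  exact one_div_le_one_div_of_le (Real.sqrt_pos.2 hc) (Real.sqrt_le_sqrt hmain)
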